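/- arXiv:0807.1967 — 2 statements merged into one kernel-verified Lean document; each statement's English description precedes it below -/
import Mathlib

section
/- Let D ⊆ ℝ[X₁,…,Xₙ]\{0} be a multiplicatively closed set with 1 ∈ D and E = D⁻¹ℝ[X₁,…,Xₙ]. For any semialgebraic set K ⊆ ℝⁿ, the preordering Pos^E(K) = {R ∈ E : there exist f ∈ ℝ[X₁,…,Xₙ], d ∈ D with R = f/d and f·d ≥ 0 pointwise on K} is closed in the topology of finitely open sets on E. -/
/-!
Elements of a finite-dimensional `U ⊆ E` have a common denominator `d`, and `f/d ∈ Pos^E(K)` iff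
`f d ≥ 0` on `K` off the zero set `Z(s)` of some `s ∈ D`. If `f_j/d ∈ Pos^E(K)`, with exceptional
polynomials `s_j`, converges to `f/d` in `U`, then `f_j → f` pointwise, so `K ∩ {f d < 0}` is
covered by the countably many `Z(s_j)`. The heart of the matter is that finitely many of them cover
it; their product then lies in `D` and witnesses `f/d ∈ Pos^E(K)`.

The finite subcover of `V(I) ∩ O`, with `O` open, is obtained by Noetherian induction on the ideal
`I`. The essential case is that `I` is prime and contains no `s_j`. There is `h ∉ I` such that every
real zero of `I` with `h ≠ 0` is a limit of real zeros of `I` at which no `s_j` vanishes. As the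
`Z(s_j)` cover `V(I) ∩ O`, it follows that `h` vanishes on `V(I) ∩ O`, and `I + (h)` is a larger
ideal with the same zeros in `O`.

The density of these generic zeros is proved one variable at a time. Let `I` be a prime ideal of
`B[X]` with contraction `J` to `B`. If `I = J[X]`, take a generic zero of `J` and move `X` off
countably many roots. Otherwise let `P ∈ I \ J[X]` have minimal degree. Where the leading
coefficient of `P` and `∂P/∂X` are nonzero, the root of `P` persists when the base point moves to a
nearby generic zero of `J`, and pseudo-division by `P` shows that the new point is a zero of `I`.
-/

open MvPolynomial MeasureTheory

noncomputable section

/-- The Euclidean (weak) topology on a real vector space; for finite-dimensional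
spaces this is the usual Euclidean topology. -/
def weakTop (V : Type*) [AddCommGroup V] [Module ℝ V] : TopologicalSpace V :=
  ⨅ L : V →ₗ[ℝ] ℝ, TopologicalSpace.induced L inferInstance

/-- The topology of finitely open sets: `O` is open iff its intersection with every
finite-dimensional subspace `U` is open in the Euclidean topology of `U`. -/
def finTop (E : Type*) [AddCommGroup E] [Module ℝ E] : TopologicalSpace E where
  IsOpen O := ∀ U : Submodule ℝ E, FiniteDimensional ℝ U →
    @IsOpen _ (weakTop U) ((Subtype.val : U → E) ⁻¹' O)
  isOpen_univ := by
    intro U _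
    letI := weakTop U
    rw [Set.preimage_univ]
    exact isOpen_univ
  isOpen_inter := by
    intro s t hs ht U hU
    letI := weakTop U
    rw [Set.preimage_inter]
    exact (hs U hU).inter (ht U hU)
  isOpen_sUnion := by
    intro s hs U hU
    letI := weakTop U
    rw [Set.preimage_sUnion]
    exact isOpen_biUnion fun t ht => hs t ht U hU

/-- The closure of a convex cone in the finest locally convex topology, via the dual
characterization: `x` lies in the closure iff `L x ≥ 0` for every linear functional `L`
nonnegative on the cone. -/
def dualClosure {E : Type*} [AddCommGroup E] [Module ℝ E] (C : Set E) : Set E :=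
  {x | ∀ L : E →ₗ[ℝ] ℝ, (∀ c ∈ C, 0 ≤ L c) → 0 ≤ L x}

/-- The preordering generated by `g 1, …, g m` in a commutative ring: all finite sums
of elements `σ • g₁^ν₁ ⋯ g_m^ν_m` with `σ` a sum of squares and `ν ∈ {0,1}^m`. -/
def genPreordering {E : Type*} [CommRing E] {m : ℕ} (g : Fin m → E) : Set E :=
  {x | ∃ σ : (Fin m → Bool) → E, (∀ ν, IsSumSq (σ ν)) ∧
    x = ∑ ν : Fin m → Bool, σ ν * ∏ j, (if ν j then g j else 1)}

/-- The basic closed semialgebraic set determined by `g 1, …, g m`. -/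
def KS {n m : ℕ} (g : Fin m → MvPolynomial (Fin n) ℝ) : Set (Fin n → ℝ) :=
  {x | ∀ i, 0 ≤ eval x (g i)}

/-- The real zero set of a polynomial. -/
def Zset {n : ℕ} (d : MvPolynomial (Fin n) ℝ) : Set (Fin n → ℝ) :=
  {x | eval x d = 0}

/-- `Pos^E(𝒳)`: elements of the localization having a representation `f/d` with
`f·d ≥ 0 pointwise on 𝒳`. -/
def PosE {n : ℕ} (D : Submonoid (MvPolynomial (Fin n) ℝ)) (X : Set (Fin n → ℝ)) :
    Set (Localization D) :=
  {R | ∃ (f : MvPolynomial (Fin n) ℝ) (d : D), R = Localization.mk f d ∧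
    ∀ x ∈ X, 0 ≤ eval x f * eval x (d : MvPolynomial (Fin n) ℝ)}


/-- A basic semialgebraic set: `{x | f x = 0 ∧ g₁ x > 0 ∧ ⋯ ∧ g_r x > 0}`. -/
def IsBasicSemialgebraic {n : ℕ} (s : Set (Fin n → ℝ)) : Prop :=
  ∃ (f : MvPolynomial (Fin n) ℝ) (r : ℕ) (g : Fin r → MvPolynomial (Fin n) ℝ),
    s = {x | eval x f = 0 ∧ ∀ i, 0 < eval x (g i)}

/-- A semialgebraic set: a finite union of basic semialgebraic sets. -/
def IsSemialgebraic {n : ℕ} (s : Set (Fin n → ℝ)) : Prop :=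
  ∃ (k : ℕ) (c : Fin k → Set (Fin n → ℝ)),
    (∀ i, IsBasicSemialgebraic (c i)) ∧ s = ⋃ i, c i

open Filter
open scoped Topology Polynomial

theorem eventually_exists_mem_nhds_eq_zero {T : Type*} [TopologicalSpace T] {F : T → ℝ → ℝ}
    {b : T} {t d : ℝ} (hF : ∀ x, Continuous (F x)) (hF' : ∀ s, ContinuousAt (fun x => F x s) b)
    (h0 : F b t = 0) (hderiv : HasDerivAt (F b) d t) (hd : d ≠ 0) {U : Set ℝ} (hU : U ∈ 𝓝 t) :
    ∀ᶠ x in 𝓝 b, ∃ s ∈ U, F x s = 0 := by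
  wlog hpos : 0 < d generalizing F d
  · simpa using this (F := fun x s => -F x s) (fun x => (hF x).neg) (fun s => (hF' s).neg)
      (by simpa using h0) hderiv.neg (neg_ne_zero.2 hd) (by grind)
  have hsign : ∀ᶠ s in 𝓝 t, SignType.sign (F b s) = SignType.sign (s - t) :=
    eventually_nhdsWithin_sign_eq_of_deriv_pos (hderiv.deriv.symm ▸ hpos) h0
  obtain ⟨r, hr, hrU⟩ := Metric.nhds_basis_closedBall.mem_iff.1 (inter_mem hU hsign)
  rw [Real.closedBall_eq_Icc] at hrU
  have hright : 0 < F b (t + r) := by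
    have h := (hrU (Set.right_mem_Icc.2 (by linarith))).2
    simpa [hr, sign_pos, sign_eq_one_iff] using h
  have hleft : F b (t - r) < 0 := by
    have h := (hrU (Set.left_mem_Icc.2 (by linarith))).2
    simpa [hr, sign_eq_neg_one_iff] using h
  filter_upwards [(hF' _).eventually (lt_mem_nhds hright),
    (hF' _).eventually (gt_mem_nhds hleft)] with x hxr hxl
  obtain ⟨s, hs, hs0⟩ := intermediate_value_Icc (by linarith : t - r ≤ t + r)
    (hF x).continuousOn ⟨hxl.le, hxr.le⟩
  exact ⟨s, (hrU hs).1, hs0⟩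

section Elimination

variable {B : Type*} [CommRing B] {I : Ideal B[X]} {P : B[X]}

/-- `P` is an element of `I` of least degree among those that do not lie in `J[X]`, where `J` is the
contraction of `I` to `B`. The condition on the leading coefficient then holds automatically
(`exists_isMinimalRelation`). For prime `I`, such a `P` is a minimal polynomial, with denominators
cleared, of the class of `X` over the fraction field of `B ⧸ J`. -/
structure IsMinimalRelation (I : Ideal B[X]) (P : B[X]) : Prop where
  mem : P ∈ I
  leadingCoeff_notMem : P.leadingCoeff ∉ I.comap Polynomial.C
  mem_map_of_natDegree_lt : ∀ Q ∈ I, Q.natDegree < P.natDegree →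
    Q ∈ (I.comap Polynomial.C).map Polynomial.C

theorem exists_isMinimalRelation (hI : ¬ I ≤ (I.comap Polynomial.C).map Polynomial.C) :
    ∃ P, IsMinimalRelation I P := by
  have hne : {Q | Q ∈ I ∧ Q ∉ (I.comap Polynomial.C).map Polynomial.C}.Nonempty :=
    SetLike.not_le_iff_exists.1 hI
  obtain ⟨P, ⟨hP, hPJ⟩, hmin⟩ := exists_minimalFor_of_wellFoundedLT _ Polynomial.natDegree hne
  have hlt : ∀ Q ∈ I, Q.natDegree < P.natDegree →
      Q ∈ (I.comap Polynomial.C).map Polynomial.C := fun Q hQ hdeg => by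
    by_contra hQJ
    exact hdeg.not_ge (hmin ⟨hQ, hQJ⟩ hdeg.le)
  refine ⟨P, hP, fun hlc => hPJ ?_, hlt⟩
  have hlead : Polynomial.C P.leadingCoeff * Polynomial.X ^ P.natDegree ∈
      (I.comap Polynomial.C).map Polynomial.C :=
    Ideal.mul_mem_right _ _ (Ideal.mem_map_of_mem _ hlc)
  have herase : P.eraseLead ∈ I := by
    rw [← Polynomial.self_sub_C_mul_X_pow]
    exact sub_mem hP (Ideal.map_comap_le hlead)
  rw [← P.eraseLead_add_C_mul_X_pow]
  refine add_mem ?_ hlead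
  rcases P.eraseLead_natDegree_lt_or_eraseLead_eq_zero with hdeg | hzero
  · exact hlt _ herase hdeg
  · exact hzero ▸ zero_mem _

namespace IsMinimalRelation

theorem natDegree_pos (hP : IsMinimalRelation I P) : 0 < P.natDegree := by
  refine Nat.pos_of_ne_zero fun h => hP.leadingCoeff_notMem ?_
  have hPC := Polynomial.eq_C_of_natDegree_eq_zero h
  rw [Ideal.mem_comap, Polynomial.leadingCoeff, h, ← hPC]
  exact hP.mem

theorem derivative_notMem [Algebra ℚ B] (hP : IsMinimalRelation I P) : P.derivative ∉ I := by
  intro hmem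
  have hcoeff := Ideal.mem_map_C_iff.1 (hP.mem_map_of_natDegree_lt _ hmem
    (Polynomial.natDegree_derivative_lt hP.natDegree_pos.ne')) (P.natDegree - 1)
  have hunit : IsUnit (P.natDegree : B) := by
    simpa using (IsUnit.mk0 (P.natDegree : ℚ) (by exact_mod_cast hP.natDegree_pos.ne')).map
      (algebraMap ℚ B)
  have hpred : P.natDegree - 1 + 1 = P.natDegree := Nat.sub_add_cancel hP.natDegree_pos
  rw [Polynomial.coeff_derivative, ← Nat.cast_succ, Nat.succ_eq_add_one, hpred,
    Ideal.mul_unit_mem_iff_mem _ hunit] at hcoeff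
  exact hP.leadingCoeff_notMem hcoeff

/-- Pseudo-division by `P` leaves a remainder of smaller degree, which lies in `J[X]`. -/
theorem le_ker_eval₂RingHom {k : Type*} [CommRing k] [IsDomain k] (hP : IsMinimalRelation I P)
    {φ : B →+* k} (hφ : I.comap Polynomial.C ≤ RingHom.ker φ) (hlc : φ P.leadingCoeff ≠ 0)
    {t : k} (ht : P.eval₂ φ t = 0) : I ≤ RingHom.ker (Polynomial.eval₂RingHom φ t) := by
  intro Q
  induction hn : Q.natDegree using Nat.strong_induction_on generalizing Q with
  | _ n ih =>
    intro hQ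
    rcases lt_or_ge Q.natDegree P.natDegree with hlt | hge
    · have hmap : (I.comap Polynomial.C).map Polynomial.C ≤
          RingHom.ker (Polynomial.eval₂RingHom φ t) :=
        Ideal.map_le_iff_le_comap.2 fun a ha => by simpa using hφ ha
      exact hmap (hP.mem_map_of_natDegree_lt Q hQ hlt)
    · have hcancel : P.cancelLeads Q ∈ RingHom.ker (Polynomial.eval₂RingHom φ t) :=
        ih _ (hn ▸ Polynomial.natDegree_cancelLeads_lt_of_natDegree_le_natDegree hge
          (hP.natDegree_pos.trans_le hge)) rfl
          (sub_mem (Ideal.mul_mem_left _ _ hQ) (Ideal.mul_mem_left _ _ hP.mem))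
      simpa [Polynomial.cancelLeads, Nat.sub_eq_zero_of_le hge, ht, hlc] using hcancel

end IsMinimalRelation

theorem isAlgebraic_quotient_of_leadingCoeff_notMem [I.IsPrime] (hP : P ∈ I)
    (hlc : P.leadingCoeff ∉ I.comap Polynomial.C) :
    Algebra.IsAlgebraic (B ⧸ I.comap (algebraMap B B[X])) (B[X] ⧸ I) := by
  let J : Ideal B := I.comap (algebraMap B B[X])
  have hX : IsAlgebraic (B ⧸ J) (Ideal.Quotient.mk I Polynomial.X) := by
    refine ⟨P.map (Ideal.Quotient.mk J), fun h0 => hlc ?_, ?_⟩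
    · have hmk : Ideal.Quotient.mk J P.leadingCoeff = 0 := by
        simpa using congrArg (fun p => p.coeff P.natDegree) h0
      exact Ideal.Quotient.eq_zero_iff_mem.1 hmk
    · have hcomp : (algebraMap (B ⧸ J) (B[X] ⧸ I)).comp (Ideal.Quotient.mk J) =
          (Ideal.Quotient.mk I).comp Polynomial.C := rfl
      rw [Polynomial.aeval_def, Polynomial.eval₂_map, hcomp, ← Polynomial.hom_eval₂,
        Polynomial.eval₂_C_X]
      exact Ideal.Quotient.eq_zero_iff_mem.2 hP
  refine ⟨fun y => ?_⟩
  obtain ⟨q, rfl⟩ := Ideal.Quotient.mk_surjective y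
  induction q using Polynomial.induction_on' with
  | add p q hp hq => simpa using hp.add hq
  | monomial n a =>
    rw [← Polynomial.C_mul_X_pow_eq_monomial, map_mul, map_pow]
    exact (isAlgebraic_algebraMap (Ideal.Quotient.mk J a)).mul (hX.pow n)

theorem exists_notMem_comap_C_mem_sup_span [I.IsPrime] (hP : P ∈ I)
    (hlc : P.leadingCoeff ∉ I.comap Polynomial.C) {e : B[X]} (he : e ∉ I) :
    ∃ c ∉ I.comap Polynomial.C, Polynomial.C c ∈ I ⊔ Ideal.span {e} := by
  have := isAlgebraic_quotient_of_leadingCoeff_notMem hP hlc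
  obtain ⟨r, hr, y, hy⟩ := (Algebra.IsAlgebraic.isAlgebraic
    (R := B ⧸ I.comap (algebraMap B B[X])) (Ideal.Quotient.mk I e)).exists_nonzero_dvd
    (mem_nonZeroDivisors_of_ne_zero fun h => he (Ideal.Quotient.eq_zero_iff_mem.1 h))
  obtain ⟨c, rfl⟩ := Ideal.Quotient.mk_surjective r
  obtain ⟨u, rfl⟩ := Ideal.Quotient.mk_surjective y
  refine ⟨c, fun h => hr (Ideal.Quotient.eq_zero_iff_mem.2 h), ?_⟩
  have hI : Polynomial.C c - e * u ∈ I := by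
    rw [← Ideal.Quotient.mk_eq_mk_iff_sub_mem, map_mul, ← hy]
    rfl
  rw [← sub_add_cancel (Polynomial.C c) (e * u)]
  exact Submodule.add_mem_sup hI (Ideal.mul_mem_right _ _ (Ideal.mem_span_singleton_self e))

end Elimination

/-- The zeros of the ideal `I` of `A`, for a family `ev` of evaluations of the elements of `A` at
the points of a topological space, are the points `p` with `I ≤ ker (ev p)`. This says that off the
hypersurface of some `h ∉ I` each of them is a limit of zeros of `I` that are generic with respect
to any given countable subset of `A` disjoint from `I`. Nothing is required if `h` vanishes at all
zeros of `I`. -/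
def HasDenseGenericZeros {A k T : Type*} [CommRing A] [Field k] [TopologicalSpace T]
    (ev : T → A →+* k) (I : Ideal A) : Prop :=
  ∃ h ∉ I, ∀ p, I ≤ RingHom.ker (ev p) → ev p h ≠ 0 → ∀ S : Set A, S.Countable → (∀ s ∈ S, s ∉ I) →
    ∃ᶠ q in 𝓝 p, I ≤ RingHom.ker (ev q) ∧ ∀ s ∈ S, ev q s ≠ 0

section GenericZeros

variable {A T : Type*} [CommRing A] [TopologicalSpace T]

theorem hasDenseGenericZeros_of_isMaximal {k : Type*} [Field k] (ev : T → A →+* k) (I : Ideal A)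
    [hI : I.IsMaximal] : HasDenseGenericZeros ev I := by
  refine ⟨1, I.one_notMem, fun p hp _ S _ hS => frequently_iff.2 fun hU =>
    ⟨p, mem_of_mem_nhds hU, hp, fun s hs hs0 => hS s hs ?_⟩⟩
  rw [hI.eq_of_le (RingHom.ker_ne_top _) hp]
  exact hs0

theorem HasDenseGenericZeros.of_ringEquiv {A' T' k : Type*} [CommRing A'] [TopologicalSpace T']
    [Field k] {ev : T → A →+* k} {ev' : T' → A' →+* k} (σ : A ≃+* A') (g : T ≃ₜ T')
    (hev : ∀ p a, ev' (g p) (σ a) = ev p a) {I : Ideal A}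
    (hI : HasDenseGenericZeros ev' (I.comap σ.symm)) : HasDenseGenericZeros ev I := by
  have hker : ∀ p, I ≤ RingHom.ker (ev p) ↔ I.comap σ.symm ≤ RingHom.ker (ev' (g p)) := fun p => by
    simp [SetLike.le_def, ← hev, σ.surjective.forall]
  obtain ⟨h, hhI, H⟩ := hI
  refine ⟨σ.symm h, hhI, fun p hp hph S hS hSI => ?_⟩
  have hfreq := H (g p) ((hker p).1 hp) (by simpa [← hev] using hph) (σ '' S) (hS.image σ)
    (by simpa using hSI)
  rw [← g.map_nhds_eq, frequently_map] at hfreq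
  exact hfreq.mono fun q hq => ⟨(hker q).2 hq.1, fun s hs =>
    hev q s ▸ hq.2 _ (Set.mem_image_of_mem σ hs)⟩

/-- Over a generic zero of `J`, all but countably many values of the free variable are generic. -/
theorem HasDenseGenericZeros.map_C {k : Type*} [NontriviallyNormedField k] [CompleteSpace k]
    {ev : T → A →+* k} {J : Ideal A} (hJ : HasDenseGenericZeros ev J) :
    HasDenseGenericZeros (fun q : T × k => Polynomial.eval₂RingHom (ev q.1) q.2)
      (J.map Polynomial.C) := by
  have hker : ∀ q : T × k, J.map Polynomial.C ≤ RingHom.ker (Polynomial.eval₂RingHom (ev q.1) q.2) ↔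
      J ≤ RingHom.ker (ev q.1) := fun q => by
    rw [Ideal.map_le_iff_le_comap]
    simp [SetLike.le_def]
  obtain ⟨h, hhJ, H⟩ := hJ
  refine ⟨Polynomial.C h, fun hh => hhJ (by simpa using Ideal.mem_map_C_iff.1 hh 0),
    fun p hp hph S hS hSJ => ?_⟩
  have hcoeff : ∀ s ∈ S, ∃ i, s.coeff i ∉ J := fun s hs => by
    simpa [Ideal.mem_map_C_iff] using hSJ s hs
  choose! i hi using hcoeff
  have hbase := H p.1 ((hker p).1 hp) (by simpa using hph) ((fun s => s.coeff (i s)) '' S)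
    (hS.image _) (by simpa using hi)
  rw [← Prod.mk.eta (p := p), nhds_prod_eq]
  refine Frequently.of_curry (hbase.mono fun b ⟨hbJ, hbS⟩ => ?_)
  have hroots : (⋃ s ∈ S, {t | (s.map (ev b)).IsRoot t}).Countable := by
    refine hS.biUnion fun s hs => (Polynomial.finite_setOfPred_isRoot fun hs0 => ?_).countable
    exact hbS _ (Set.mem_image_of_mem _ hs)
      (by simpa using congrArg (fun P => P.coeff (i s)) hs0)
  refine (mem_closure_iff_frequently.1 (hroots.dense_compl k p.2)).mono fun t ht =>
    ⟨(hker (b, t)).2 hbJ, fun s hs hs0 => ht (Set.mem_biUnion hs ?_)⟩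
  simpa [Polynomial.IsRoot, Polynomial.eval_map] using hs0

theorem hasDenseGenericZeros_of_isMinimalRelation [Algebra ℚ A] {ev : T → A →+* ℝ}
    (hev : ∀ a, Continuous fun b => ev b a) {I : Ideal A[X]} [I.IsPrime] {P : A[X]}
    (hP : IsMinimalRelation I P) (hJ : HasDenseGenericZeros ev (I.comap Polynomial.C)) :
    HasDenseGenericZeros (fun q : T × ℝ => Polynomial.eval₂RingHom (ev q.1) q.2) I := by
  obtain ⟨h, hhJ, H⟩ := hJ
  refine ⟨Polynomial.C h * (Polynomial.C P.leadingCoeff * P.derivative), ?_, ?_⟩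
  · simp only [Ideal.IsPrime.mul_mem_iff_mem_or_mem, not_or]
    exact ⟨hhJ, hP.leadingCoeff_notMem, hP.derivative_notMem⟩
  rintro ⟨b, t⟩ hbt hne S hS hSI
  simp only [map_mul, mul_ne_zero_iff, Polynomial.coe_eval₂RingHom, Polynomial.eval₂_C] at hne
  obtain ⟨hhb, hlcb, hderiv⟩ := hne
  choose! c hcJ hcI using fun s hs =>
    exists_notMem_comap_C_mem_sup_span hP.mem hP.leadingCoeff_notMem (hSI s hs)
  have hbase := H b (fun a ha => by simpa using hbt ha) hhb (c '' S) (hS.image c)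
    (by simpa using hcJ)
  have hlc : ∀ᶠ x in 𝓝 b, ev x P.leadingCoeff ≠ 0 := (hev _).continuousAt.eventually_ne hlcb
  have hroot : ∀ U ∈ 𝓝 t, ∀ᶠ x in 𝓝 b, ∃ s ∈ U, P.eval₂ (ev x) s = 0 := fun U hU => by
    refine eventually_exists_mem_nhds_eq_zero (F := fun x s => P.eval₂ (ev x) s)
      (fun x => by simpa [Polynomial.eval_map] using (P.map (ev x)).continuous) (fun s => ?_)
      (hbt hP.mem) (by simpa [Polynomial.eval_map] using (P.map (ev b)).hasDerivAt t) hderiv hU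
    simp only [Polynomial.eval₂_eq_sum_range]
    exact (continuous_finsetSum _ fun i _ => (hev _).mul continuous_const).continuousAt
  refine frequently_iff.2 fun hW => ?_
  obtain ⟨V, hV, U, hU, hVU⟩ := mem_nhds_prod_iff.1 hW
  obtain ⟨x, ⟨hxJ, hxS⟩, hxlc, hxV, y, hyU, hy⟩ :=
    (hbase.and_eventually (hlc.and (Filter.Eventually.and hV (hroot U hU)))).exists
  have hker : I ≤ RingHom.ker (Polynomial.eval₂RingHom (ev x) y) :=
    hP.le_ker_eval₂RingHom hxJ hxlc hy
  refine ⟨(x, y), hVU ⟨hxV, hyU⟩, hker, fun s hs hs0 => hxS _ (Set.mem_image_of_mem c hs) ?_⟩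
  have hsup : I ⊔ Ideal.span {s} ≤ RingHom.ker (Polynomial.eval₂RingHom (ev x) y) :=
    sup_le hker ((Ideal.span_singleton_le_iff_mem _).2 hs0)
  simpa using hsup (hcI s hs)

theorem HasDenseGenericZeros.of_comap_C [Algebra ℚ A] {ev : T → A →+* ℝ}
    (hev : ∀ a, Continuous fun b => ev b a) {I : Ideal A[X]} [I.IsPrime]
    (hJ : HasDenseGenericZeros ev (I.comap Polynomial.C)) :
    HasDenseGenericZeros (fun q : T × ℝ => Polynomial.eval₂RingHom (ev q.1) q.2) I := by
  by_cases hI : I ≤ (I.comap Polynomial.C).map Polynomial.C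
  · rw [hI.antisymm Ideal.map_comap_le]
    exact hJ.map_C
  · obtain ⟨P, hP⟩ := exists_isMinimalRelation hI
    exact hasDenseGenericZeros_of_isMinimalRelation hev hP hJ

theorem hasDenseGenericZeros_eval {n : ℕ} (I : Ideal (MvPolynomial (Fin n) ℝ)) [hI : I.IsPrime] :
    HasDenseGenericZeros (fun p : Fin n → ℝ => eval p) I := by
  induction n with
  | zero =>
    have hfield : IsField (MvPolynomial (Fin 0) ℝ) :=
      (MvPolynomial.isEmptyRingEquiv ℝ (Fin 0)).toMulEquiv.isField (Field.toIsField ℝ)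
    have hmax : I.IsMaximal := by
      let _ := hfield.toField
      rw [(Ideal.eq_bot_or_top I).resolve_right hI.ne_top]
      exact Ideal.bot_isMaximal
    exact hasDenseGenericZeros_of_isMaximal _ I
  | succ n ih =>
    let σ := (MvPolynomial.finSuccEquiv ℝ n).toRingEquiv
    let g : (Fin (n + 1) → ℝ) ≃ₜ (Fin n → ℝ) × ℝ :=
      (Fin.consEquivL ℝ fun _ => ℝ).symm.toHomeomorph.trans (Homeomorph.prodComm _ _)
    have hprime : (I.comap σ.symm).IsPrime := Ideal.IsPrime.comap _
    refine HasDenseGenericZeros.of_ringEquiv σ g (fun p a => ?_)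
      (HasDenseGenericZeros.of_comap_C MvPolynomial.continuous_eval (ih _))
    obtain ⟨⟨b, t⟩, rfl⟩ := g.symm.surjective p
    rw [g.apply_symm_apply]
    exact (Polynomial.eval_map _ _).symm.trans (MvPolynomial.eval_eq_eval_mv_eval' b t a).symm

theorem exists_finset_subset_of_forall_zero {k : Type*} [Field k] [IsNoetherianRing A]
    {ev : T → A →+* k} (hev : ∀ I : Ideal A, I.IsPrime → HasDenseGenericZeros ev I) {O : Set T}
    (hO : IsOpen O) {S : Set A} (hS : S.Countable) (I : Ideal A)
    (hcov : ∀ p ∈ O, I ≤ RingHom.ker (ev p) → ∃ s ∈ S, ev p s = 0) :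
    ∃ F : Finset A, ↑F ⊆ S ∧ ∀ p ∈ O, I ≤ RingHom.ker (ev p) → ∃ s ∈ F, ev p s = 0 := by
  classical
  induction I using WellFoundedGT.induction with
  | _ I ih =>
  have hstep : ∀ a ∉ I, ∃ F : Finset A, ↑F ⊆ S ∧
      ∀ p ∈ O, I ≤ RingHom.ker (ev p) → ev p a = 0 → ∃ s ∈ F, ev p s = 0 := by
    intro a ha
    have hlt : I < I ⊔ Ideal.span {a} :=
      left_lt_sup.2 fun h => ha (h (Ideal.mem_span_singleton_self a))
    obtain ⟨F, hFS, hF⟩ := ih _ hlt fun p hp hpI => hcov p hp (le_sup_left.trans hpI)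
    exact ⟨F, hFS, fun p hp hpI hpa =>
      hF p hp (sup_le hpI ((Ideal.span_singleton_le_iff_mem _).2 hpa))⟩
  by_cases hprime : I.IsPrime
  · by_cases hSI : ∃ s ∈ S, s ∈ I
    · obtain ⟨s, hs, hsI⟩ := hSI
      exact ⟨{s}, by simpa using hs, fun p _ hpI => ⟨s, by simp, hpI hsI⟩⟩
    · push Not at hSI
      obtain ⟨h, hhI, H⟩ := hev I hprime
      have hvanish : ∀ p ∈ O, I ≤ RingHom.ker (ev p) → ev p h = 0 := by
        intro p hp hpI
        by_contra hph
        obtain ⟨q, ⟨hqI, hqS⟩, hqO⟩ :=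
          ((H p hpI hph S hS hSI).and_eventually (hO.mem_nhds hp)).exists
        obtain ⟨s, hs, hs0⟩ := hcov q hqO hqI
        exact hqS s hs hs0
      obtain ⟨F, hFS, hF⟩ := hstep h hhI
      exact ⟨F, hFS, fun p hp hpI => hF p hp hpI (hvanish p hp hpI)⟩
  · rcases Ideal.not_isPrime_iff.1 hprime with rfl | ⟨a, ha, b, hb, hab⟩
    · exact ⟨∅, by simp, fun p _ hp => (RingHom.ker_ne_top _ (top_le_iff.1 hp)).elim⟩
    · obtain ⟨F, hFS, hF⟩ := hstep a ha
      obtain ⟨G, hGS, hG⟩ := hstep b hb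
      refine ⟨F ∪ G, by simp [hFS, hGS], fun p hp hpI => ?_⟩
      have hpab : ev p a * ev p b = 0 := by simpa using hpI hab
      rcases mul_eq_zero.1 hpab with hpa | hpb
      · exact (hF p hp hpI hpa).imp fun s hs => ⟨Finset.mem_union_left _ hs.1, hs.2⟩
      · exact (hG p hp hpI hpb).imp fun s hs => ⟨Finset.mem_union_right _ hs.1, hs.2⟩

end GenericZeros

/-- A finite union of intersections of a real algebraic set with a Euclidean open set. Over `ℝ` one
polynomial is enough for each piece, since a sum of squares has the common zeros of its summands. -/
def IsFiniteUnionZsetInterOpen {n : ℕ} (K : Set (Fin n → ℝ)) : Prop :=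
  ∃ (m : ℕ) (f : Fin m → MvPolynomial (Fin n) ℝ) (O : Fin m → Set (Fin n → ℝ)),
    (∀ i, IsOpen (O i)) ∧ K = ⋃ i, Zset (f i) ∩ O i

theorem IsSemialgebraic.isFiniteUnionZsetInterOpen {n : ℕ} {K : Set (Fin n → ℝ)}
    (hK : IsSemialgebraic K) : IsFiniteUnionZsetInterOpen K := by
  obtain ⟨m, c, hc, rfl⟩ := hK
  choose f r g hfg using hc
  refine ⟨m, f, fun i => ⋂ j, {x | 0 < eval x (g i j)}, fun i => ?_, ?_⟩
  · exact isOpen_iInter_of_finite fun j => isOpen_lt continuous_const (continuous_eval _)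
  · ext x
    simp [hfg, Zset]

namespace IsFiniteUnionZsetInterOpen

variable {n : ℕ} {K : Set (Fin n → ℝ)}

theorem inter (hK : IsFiniteUnionZsetInterOpen K) {U : Set (Fin n → ℝ)} (hU : IsOpen U) :
    IsFiniteUnionZsetInterOpen (K ∩ U) := by
  obtain ⟨m, f, O, hO, rfl⟩ := hK
  refine ⟨m, f, fun i => O i ∩ U, fun i => (hO i).inter hU, ?_⟩
  simp only [Set.iUnion_inter, Set.inter_assoc]

theorem exists_finset_subset_of_countable_cover (hK : IsFiniteUnionZsetInterOpen K)
    {S : Set (MvPolynomial (Fin n) ℝ)} (hS : S.Countable) (hcov : ∀ x ∈ K, ∃ s ∈ S, eval x s = 0) :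
    ∃ F : Finset (MvPolynomial (Fin n) ℝ), ↑F ⊆ S ∧ ∀ x ∈ K, ∃ s ∈ F, eval x s = 0 := by
  classical
  obtain ⟨m, f, O, hO, rfl⟩ := hK
  have hker : ∀ i x, Ideal.span {f i} ≤ RingHom.ker (eval x) ↔ x ∈ Zset (f i) := fun i x =>
    Ideal.span_singleton_le_iff_mem _
  choose F hFS hF using fun i => exists_finset_subset_of_forall_zero (T := Fin n → ℝ)
    (fun I _ => hasDenseGenericZeros_eval I) (hO i) hS (Ideal.span {f i}) fun x hx hxf =>
      hcov x (Set.mem_iUnion.2 ⟨i, (hker i x).1 hxf, hx⟩)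
  refine ⟨Finset.univ.biUnion F, by simpa using hFS, fun x hx => ?_⟩
  obtain ⟨i, hxf, hxO⟩ := Set.mem_iUnion.1 hx
  obtain ⟨s, hs, hs0⟩ := hF i x hxO ((hker i x).2 hxf)
  exact ⟨s, Finset.mem_biUnion.2 ⟨i, Finset.mem_univ i, hs⟩, hs0⟩

end IsFiniteUnionZsetInterOpen

section PosE

variable {n : ℕ} {D : Submonoid (MvPolynomial (Fin n) ℝ)} {K : Set (Fin n → ℝ)}

theorem mk_mem_PosE_iff {f : MvPolynomial (Fin n) ℝ} {d : D} :
    Localization.mk f d ∈ PosE D K ↔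
      ∃ s ∈ D, ∀ x ∈ K, eval x s ≠ 0 → 0 ≤ eval x f * eval x d.1 := by
  constructor
  · rintro ⟨f', d', heq, hpos⟩
    obtain ⟨c, hc⟩ := Localization.r_iff_exists.1 (Localization.mk_eq_mk_iff.1 heq)
    refine ⟨c * d', (c * d').2, fun x hx hne => ?_⟩
    simp only [map_mul, mul_ne_zero_iff] at hne
    obtain ⟨hcx, hdx⟩ := hne
    have hcross : eval x d'.1 * eval x f = eval x d.1 * eval x f' :=
      mul_left_cancel₀ hcx (by simpa using congrArg (eval x) hc)
    have hsq : eval x f * eval x d.1 * eval x d'.1 ^ 2 =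
        eval x f' * eval x d'.1 * eval x d.1 ^ 2 := by
      linear_combination eval x d.1 * eval x d'.1 * hcross
    exact nonneg_of_mul_nonneg_left (hsq ▸ mul_nonneg (hpos x hx) (sq_nonneg _))
      (sq_pos_of_ne_zero hdx)
  · rintro ⟨s, hs, hpos⟩
    refine ⟨s * f, ⟨s, hs⟩ * d, ?_, fun x hx => ?_⟩
    · rw [Localization.mk_eq_mk_iff, Localization.r_iff_exists]
      exact ⟨1, by simp; ring⟩
    · have hsq : eval x (s * f) * eval x (s * d.1) = eval x s ^ 2 * (eval x f * eval x d.1) := by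
        simp only [map_mul]
        ring
      rw [Submonoid.coe_mul, hsq]
      rcases eq_or_ne (eval x s) 0 with hs0 | hs0
      · simp [hs0]
      · exact mul_nonneg (sq_nonneg _) (hpos x hx hs0)

theorem mk_mem_PosE_of_tendsto (hK : IsFiniteUnionZsetInterOpen K) {κ : Type*} [Countable κ]
    {l : Filter κ} [l.NeBot] {g : κ → MvPolynomial (Fin n) ℝ} {f : MvPolynomial (Fin n) ℝ} {d : D}
    (hg : ∀ j, Localization.mk (g j) d ∈ PosE D K)
    (hlim : ∀ x ∈ K, Tendsto (fun j => eval x (g j)) l (𝓝 (eval x f))) :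
    Localization.mk f d ∈ PosE D K := by
  simp only [mk_mem_PosE_iff] at hg ⊢
  choose s hsD hs using hg
  have hopen : IsOpen {x : Fin n → ℝ | eval x f * eval x d.1 < 0} :=
    isOpen_lt ((continuous_eval _).mul (continuous_eval _)) continuous_const
  have hcov : ∀ x ∈ K ∩ {x | eval x f * eval x d.1 < 0}, ∃ e ∈ Set.range s, eval x e = 0 := by
    rintro x ⟨hxK, hneg⟩
    by_contra! hne
    exact hneg.not_ge (ge_of_tendsto' ((hlim x hxK).mul_const _)
      fun j => hs j x hxK (hne _ (Set.mem_range_self j)))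
  obtain ⟨F, hFs, hF⟩ :=
    (hK.inter hopen).exists_finset_subset_of_countable_cover (Set.countable_range s) hcov
  have hFD : ∀ e ∈ F, e ∈ D := fun e he => by
    obtain ⟨j, rfl⟩ := hFs he
    exact hsD j
  refine ⟨∏ e ∈ F, e, prod_mem hFD, fun x hxK hne => ?_⟩
  by_contra! hneg
  obtain ⟨e, he, he0⟩ := hF x ⟨hxK, hneg⟩
  exact hne (by rw [map_prod, Finset.prod_eq_zero he he0])

end PosE

theorem isClosed_finTop_of_coordinates {E : Type*} [AddCommGroup E] [Module ℝ E] {C : Set E}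
    (hC : ∀ (m : ℕ) (v : Fin m → E), IsClosed {c : Fin m → ℝ | ∑ i, c i • v i ∈ C}) :
    IsClosed[finTop E] C := by
  refine @IsClosed.mk _ (finTop E) _ fun U hU => ?_
  let β := Module.finBasis ℝ U
  let _ : TopologicalSpace U := weakTop U
  have hcont : Continuous β.equivFun := continuous_pi fun i => continuous_iff_le_induced.2
    (iInf_le (fun L : U →ₗ[ℝ] ℝ => TopologicalSpace.induced L inferInstance) (β.coord i))
  have hsum : ∀ u : U, ∑ i, β.equivFun u i • (β i : E) = u := fun u => by
    simpa only [map_sum, map_smul, Submodule.subtype_apply] using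
      congrArg U.subtype (β.sum_equivFun u)
  have hpre : (Subtype.val : U → E) ⁻¹' C =
      β.equivFun ⁻¹' {c | ∑ i, c i • (β i : E) ∈ C} := by
    ext u
    simp only [Set.mem_preimage, Set.mem_ofPred_eq, hsum]
  rw [Set.preimage_compl, hpre]
  exact ((hC _ _).preimage hcont).isOpen_compl

theorem exists_forall_eq_localization_mk {R ι : Type*} [CommRing R] {D : Submonoid R} [Finite ι]
    (v : ι → Localization D) : ∃ (f : ι → R) (d : D), ∀ i, v i = Localization.mk (f i) d := by
  obtain ⟨d, hd⟩ := IsLocalization.exist_integer_multiples_of_finite D v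
  choose f hf using hd
  refine ⟨f, d, fun i => ?_⟩
  rw [Localization.mk_eq_mk', eq_comm, IsLocalization.mk'_eq_iff_eq_mul, hf i,
    Algebra.smul_def, mul_comm]

theorem posE_isClosed_finTop_general {n : ℕ} (D : Submonoid (MvPolynomial (Fin n) ℝ))
    (K : Set (Fin n → ℝ)) (hK : IsFiniteUnionZsetInterOpen K) :
    IsClosed[finTop (Localization D)] (PosE D K) := by
  refine isClosed_finTop_of_coordinates fun m v => ?_
  obtain ⟨f, d, hfd⟩ := exists_forall_eq_localization_mk v
  have hsum : ∀ c : Fin m → ℝ, ∑ i, c i • v i = Localization.mk (∑ i, c i • f i) d := fun c => by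
    simp only [hfd, Localization.smul_mk, Localization.mk_sum]
  simp only [hsum]
  refine IsSeqClosed.isClosed fun c c₀ hc hlim =>
    mk_mem_PosE_of_tendsto (l := atTop) hK hc fun x _ => ?_
  have hcont : Continuous fun c : Fin m → ℝ => eval x (∑ i, c i • f i) := by
    simp only [map_sum, smul_eval]
    fun_prop
  exact (hcont.tendsto c₀).comp hlim

/-- For a semialgebraic set `K`, the preordering `Pos^E(K)` is closed
in the topology of finitely open sets on `E = D⁻¹ℝ[X]`. -/
theorem posE_isClosed_finTop
    {n : ℕ} (D : Submonoid (MvPolynomial (Fin n) ℝ))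
    (hD0 : (0 : MvPolynomial (Fin n) ℝ) ∉ D)
    (K : Set (Fin n → ℝ)) (hK : IsSemialgebraic K) :
    @IsClosed _ (finTop (Localization D)) (PosE D K) :=
  posE_isClosed_finTop_general D K hK.isFiniteUnionZsetInterOpen

end
end

section
/- Let E and F be real vector spaces, π : E → F a surjective linear map, and C a convex cone in E containing the kernel of π. Then π(closure(C)) = closure(π(C)), where either both E and F carry the finest locally convex topology, or both carry the topology of finitely open sets. -/
/-!
A linear section `s` of `π` maps `π '' C` back into `C`, because `C`, being a cone that contains
`ker π`, is a union of fibres of `π`. Both closures are functorial: a linear map sending `A` into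
`B` sends the closure of `A` into that of `B`. Hence `π` and `s` restrict to maps between the
closures of `C` and of `π '' C`, and `π ∘ s = id` gives the equality.
-/

open MvPolynomial MeasureTheory

noncomputable section

section Functoriality

variable {E F : Type*} [AddCommGroup E] [Module ℝ E] [AddCommGroup F] [Module ℝ F]

theorem mapsTo_dualClosure (f : E →ₗ[ℝ] F) {A : Set E} {B : Set F} (h : Set.MapsTo f A B) :
    Set.MapsTo f (dualClosure A) (dualClosure B) :=
  fun _ hx L hL => hx (L ∘ₗ f) fun _ hc => hL _ (h hc)

theorem continuous_weakTop (f : E →ₗ[ℝ] F) : @Continuous _ _ (weakTop E) (weakTop F) f := by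
  let := weakTop E
  refine continuous_iInf_rng.2 fun L => continuous_induced_rng.2 ?_
  exact continuous_iInf_dom (i := L ∘ₗ f) continuous_induced_dom

theorem continuous_finTop (f : E →ₗ[ℝ] F) : @Continuous _ _ (finTop E) (finTop F) f := by
  let := finTop E
  let := finTop F
  refine continuous_def.2 fun O hO U _ => ?_
  let fU : U →ₗ[ℝ] U.map f := f.restrict fun _ => Submodule.mem_map_of_mem
  let := weakTop U
  let := weakTop (U.map f)
  exact (hO (U.map f) inferInstance).preimage (continuous_weakTop fU)

theorem mapsTo_closure_finTop (f : E →ₗ[ℝ] F) {A : Set E} {B : Set F} (h : Set.MapsTo f A B) :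
    Set.MapsTo f (@closure _ (finTop E) A) (@closure _ (finTop F) B) := by
  let := finTop E
  let := finTop F
  exact h.closure (continuous_finTop f)

end Functoriality

theorem preimage_image_subset_of_ker_subset {G H : Type*} [AddGroup G] [AddGroup H] (f : G →+ H)
    {C : Set G} (hadd : ∀ a ∈ C, ∀ b ∈ C, a + b ∈ C) (hker : (f.ker : Set G) ⊆ C) :
    f ⁻¹' (f '' C) ⊆ C := by
  rintro x ⟨c, hc, hcx⟩
  have hdiff : -c + x ∈ C := hker (by simp [AddMonoidHom.mem_ker, hcx])
  simpa using hadd c hc _ hdiff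

section RightInverse

variable {α β : Type*} {f : α → β} {g : β → α}

theorem mapsTo_image_of_rightInverse (hgf : Function.RightInverse g f) {C : Set α}
    (hC : f ⁻¹' (f '' C) ⊆ C) : Set.MapsTo g (f '' C) C :=
  fun y hy => hC (by rwa [Set.mem_preimage, hgf y])

theorem image_eq_of_rightInverse_of_mapsTo (hgf : Function.RightInverse g f) {A : Set α}
    {B : Set β} (hf : Set.MapsTo f A B) (hg : Set.MapsTo g B A) : f '' A = B :=
  ((hgf.rightInvOn B).surjOn hg).image_eq_of_mapsTo hf

end RightInverse

/-- When `C` is not a cone, `dualClosure C` is the closure of the convex cone it generates. -/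
theorem image_closure_eq_closure_image_of_cone_general
    {E F : Type*} [AddCommGroup E] [Module ℝ E] [AddCommGroup F] [Module ℝ F]
    (π : E →ₗ[ℝ] F) (hsurj : Function.Surjective π) {C : Set E} (hC : π ⁻¹' (π '' C) ⊆ C) :
    π '' dualClosure C = dualClosure (π '' C) ∧
    π '' (@closure _ (finTop E) C) = @closure _ (finTop F) (π '' C) := by
  obtain ⟨s, hs⟩ := π.exists_rightInverse_of_surjective (LinearMap.range_eq_top.2 hsurj)
  have hsπ : Function.RightInverse s π := LinearMap.congr_fun hs
  have hπC : Set.MapsTo π C (π '' C) := Set.mapsTo_image π C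
  have hsC : Set.MapsTo s (π '' C) C := mapsTo_image_of_rightInverse hsπ hC
  exact ⟨image_eq_of_rightInverse_of_mapsTo hsπ (mapsTo_dualClosure π hπC)
      (mapsTo_dualClosure s hsC),
    image_eq_of_rightInverse_of_mapsTo hsπ (mapsTo_closure_finTop π hπC)
      (mapsTo_closure_finTop s hsC)⟩

/-- For a surjective linear map `π : E → F` and a convex cone
`C ⊆ E` containing `ker π`, the image of the closure of `C` equals the closure of the
image of `C`, both for the finest locally convex topology (described dually) and for
the topology of finitely open sets. -/
theorem image_closure_eq_closure_image_of_cone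
    {E F : Type*} [AddCommGroup E] [Module ℝ E] [AddCommGroup F] [Module ℝ F]
    (π : E →ₗ[ℝ] F) (hsurj : Function.Surjective π)
    (C : Set E)
    (hadd : ∀ a ∈ C, ∀ b ∈ C, a + b ∈ C)
    (hsmul : ∀ r : ℝ, 0 ≤ r → ∀ a ∈ C, r • a ∈ C)
    (hker : (LinearMap.ker π : Set E) ⊆ C) :
    π '' dualClosure C = dualClosure (π '' C) ∧
    π '' (@closure _ (finTop E) C) = @closure _ (finTop F) (π '' C) :=
  image_closure_eq_closure_image_of_cone_general π hsurj
    (preimage_image_subset_of_ker_subset π.toAddMonoidHom hadd hker)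

end
end
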